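/- arXiv:2303.05751 — 3 statements merged into one kernel-verified Lean document; each statement's English description precedes it below -/
import Mathlib

section
/- Let M be a balanced multiset of subsets of [N] that is Z-irreducible, with complexity m. Then m ≤ (N+1)^{(N+1)/2}. -/
/-- A multiset `M` of subsets of `[N]` is balanced with complexity `m` if each
`i ∈ [N]` appears in exactly `m` sets of `M`, counted with multiplicity. -/
def BalancedMultiset {N : ℕ} (M : Multiset (Finset (Fin N))) (m : ℕ) : Prop :=
  ∀ i : Fin N, (M.filter (fun I => i ∈ I)).card = m

/-- A balanced multiset is `ℤ`-irreducible if no proper nonempty sub-multiset of it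
is balanced. -/
def ZIrreducible {N : ℕ} (M : Multiset (Finset (Fin N))) : Prop :=
  (∃ m : ℕ, BalancedMultiset M m) ∧
  ∀ M' : Multiset (Finset (Fin N)), M' ≤ M → M' ≠ 0 → M' ≠ M →
    ¬ ∃ m' : ℕ, BalancedMultiset M' m'

theorem prod_le_mean_pow {n : Type*} [Fintype n] [Nonempty n] (z : n → ℝ) (hz : ∀ i, 0 ≤ z i) :
    ∏ i, z i ≤ ((∑ i, z i) / Fintype.card n) ^ (Fintype.card n) := by
  have h := Real.geom_mean_le_arith_mean Finset.univ (fun _ => (1:ℝ)) z (by simp) (by simp [Fintype.card_pos]) (by simpa using hz)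
  simp only [Real.rpow_one, one_mul, Finset.sum_const, Finset.card_univ, nsmul_eq_mul, mul_one] at h
  have h0 : 0 ≤ ∏ i, z i := Finset.prod_nonneg (fun i _ => hz i)
  have h2 := pow_le_pow_left₀ (by positivity) h (Fintype.card n)
  rwa [Real.rpow_inv_natCast_pow h0 (by simp)] at h2

theorem hadamard_pm {n : Type*} [Fintype n] [DecidableEq n] [Nonempty n] (C : Matrix n n ℝ)
    (hC : ∀ i j, C i j ^ 2 = 1) : C.det ^ 2 ≤ (Fintype.card n : ℝ) ^ (Fintype.card n) := by
  have hps : (C.conjTranspose * C).PosSemidef := Matrix.posSemidef_conjTranspose_mul_self C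
  have hdet := hps.1.det_eq_prod_eigenvalues
  have htr := hps.1.trace_eq_sum_eigenvalues
  have hnn := hps.eigenvalues_nonneg
  have hn0 : (Fintype.card n : ℝ) ≠ 0 := by simp
  have hn0' : Fintype.card n ≠ 0 := by simp
  have ht : (C.conjTranspose * C).trace = (Fintype.card n : ℝ) * Fintype.card n := by
    simp [Matrix.trace, Matrix.mul_apply, ← pow_two, hC]
  have h := prod_le_mean_pow _ hnn
  simp only [RCLike.ofReal_real_eq_id, id_eq] at hdet htr
  rw [← hdet, ← htr, ht, mul_div_cancel_right₀ _ hn0, Matrix.det_mul,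
    Matrix.det_conjTranspose, star_trivial, ← pow_two] at h
  exact h

theorem hadamard_01 {N : ℕ} (B : Matrix (Fin N) (Fin N) ℝ)
    (hB : ∀ i j, B i j = 0 ∨ B i j = 1) : 2 ^ N * |B.det| ≤ ((N : ℝ) + 1) ^ (((N : ℝ) + 1) / 2) := by
  let P : Matrix Unit (Fin N) ℝ := Matrix.of fun _ _ => 1
  let Q : Matrix (Fin N) Unit ℝ := Matrix.of fun _ _ => -1
  let D : Matrix (Fin N) (Fin N) ℝ := Matrix.of fun i j => 2 * B i j - 1
  have h := hadamard_pm (Matrix.fromBlocks (1 : Matrix Unit Unit ℝ) P Q D) (by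
    rintro (i | i) (j | j)
    · simp [Matrix.fromBlocks]
    · simp [Matrix.fromBlocks, P]
    · simp [Matrix.fromBlocks, Q]
    · rcases hB i j with h | h <;> norm_num [h, Matrix.fromBlocks, D])
  rw [Matrix.det_fromBlocks_one₁₁] at h
  have e : D - Q * P = (2:ℝ) • B := by
    ext i j
    simp [Matrix.mul_apply, P, Q, D]
  rw [e, Matrix.det_smul] at h
  simp only [Fintype.card_fin, Fintype.card_sum, Fintype.card_unit] at h
  have h2 := Real.abs_le_sqrt h
  rw [abs_mul, abs_of_nonneg (by positivity : (0:ℝ) ≤ 2 ^ N)] at h2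
  refine h2.trans (le_of_eq ?_)
  rw [Real.sqrt_eq_rpow, ← Real.rpow_natCast, ← Real.rpow_mul (by positivity)]
  push_cast
  congr 1 <;> ring

theorem reduce_support {α : Type*} [Fintype α] [DecidableEq α] (x y : α → ℝ) (hx : ∀ a, 0 ≤ x a)
    (hxy : ∀ a, x a = 0 → y a = 0) (hy : ∃ a, 0 < y a) :
    ∃ t : ℝ, 0 ≤ t ∧ (∀ a, 0 ≤ x a - t * y a) ∧
      (Finset.univ.filter (fun a => x a - t * y a ≠ 0)).card <
        (Finset.univ.filter (fun a => x a ≠ 0)).card := by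
  obtain ⟨a, ha, hmin⟩ := Finset.exists_min_image (Finset.univ.filter (fun a => 0 < y a))
    (fun a => x a / y a) (by obtain ⟨a, ha⟩ := hy; exact ⟨a, by simpa using ha⟩)
  simp only [Finset.mem_filter, Finset.mem_univ, true_and] at ha hmin
  refine ⟨x a / y a, div_nonneg (hx a) ha.le, ?_, ?_⟩
  · intro b
    rcases lt_or_ge 0 (y b) with hb | hb
    · have := hmin b hb
      rw [le_div_iff₀ hb] at this
      linarith
    · have := mul_nonpos_of_nonneg_of_nonpos (div_nonneg (hx a) ha.le) hb
      linarith [hx b]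
  · apply Finset.card_lt_card
    rw [Finset.ssubset_iff_of_subset]
    · refine ⟨a, ?_, ?_⟩
      · simp only [Finset.mem_filter, Finset.mem_univ, true_and]
        intro h
        exact ha.ne' (hxy a h)
      · simp [ha.ne']
    · intro b
      simp only [Finset.mem_filter, Finset.mem_univ, true_and]
      contrapose!
      intro h
      simp [h, hxy b h]
/-- The incidence column of a set. -/
def colVec {N : ℕ} (I : Finset (Fin N)) : Fin N → ℝ := fun i => if i ∈ I then 1 else 0

theorem cramer_step {N : ℕ} (x : Finset (Fin N) → ℝ) (c : ℝ) (hx : ∀ I, 0 ≤ x I) (hc : 0 < c)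
    (hbal : ∀ i, ∑ I, x I * colVec I i = c)
    (hli : LinearIndepOn ℝ colVec {I | x I ≠ 0}) :
    ∃ (v : Finset (Fin N) → ℕ) (d : ℕ), 0 < d ∧ (∀ I, (v I : ℝ) = d / c * x I) ∧
      2 ^ N * (d : ℝ) ≤ ((N : ℝ) + 1) ^ (((N : ℝ) + 1) / 2) := by
  classical
  obtain ⟨b, -, hSb, hspan, hb⟩ := exists_linearIndepOn_extension hli (Set.subset_univ _)
  have htop : ⊤ ≤ Submodule.span ℝ (Set.range (fun I : b => colVec I.1)) := by
    have e1 : Set.range (fun I : b => colVec I.1) = colVec '' b := by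
      ext y; simp
    rw [e1]
    intro y _
    have : y = ∑ i, y i • colVec ({i} : Finset (Fin N)) := by
      ext j; simp [colVec]
    rw [this]
    exact Submodule.sum_mem _ fun i _ => Submodule.smul_mem _ _ (hspan ⟨_, trivial, rfl⟩)
  let bas : Module.Basis b ℝ (Fin N → ℝ) := Module.Basis.mk hb htop
  have hcard : Fintype.card b = N := by
    rw [← Module.finrank_eq_card_basis bas]; simp
  let e : Fin N ≃ b := (Fintype.equivFinOfCardEq hcard).symm
  let Bz : Matrix (Fin N) (Fin N) ℤ := Matrix.of fun i j => if i ∈ (e j).1 then 1 else 0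
  let B : Matrix (Fin N) (Fin N) ℝ := Bz.map (Int.castRingHom ℝ)
  have hBe : ∀ i j, B i j = colVec (e j).1 i := by
    intro i j; simp [B, Bz, colVec]
  have hdetB : B.det = (Bz.det : ℝ) := by
    have := (Int.castRingHom ℝ).map_det Bz
    simpa [B] using this.symm
  have hunit : IsUnit B := by
    rw [← Matrix.linearIndependent_cols_iff_isUnit]
    have : B.col = (fun I : b => colVec I.1) ∘ e := by
      ext j i; simp [Matrix.col, hBe]
    rw [this]
    exact LinearIndependent.comp hb e e.injective
  have hdet0 : Bz.det ≠ 0 := by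
    have := (Matrix.isUnit_iff_isUnit_det B).1 hunit
    rw [hdetB] at this
    exact_mod_cast this.ne_zero
  let w : Fin N → ℤ := Bz.adjugate.mulVec 1
  have hw : Bz.mulVec w = Bz.det • (1 : Fin N → ℤ) := by
    simp [w, Matrix.mulVec_mulVec, Matrix.mul_adjugate]
  have hwR : ∀ i, ∑ j, B i j * (w j : ℝ) = Bz.det := by
    intro i
    have := congrFun hw i
    simp only [Matrix.mulVec, dotProduct, Pi.smul_apply, Pi.one_apply, smul_eq_mul, mul_one] at this
    rw [← this]
    simp [B]
  have hz : ∀ i, ∑ j, B i j * x (e j).1 = c := by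
    intro i
    rw [← hbal i]
    simp only [hBe]
    rw [e.sum_comp (fun I : b => colVec I.1 i * x I.1)]
    rw [← Finset.sum_subtype (Finset.univ.filter (· ∈ b)) (by simp)
      (fun I => colVec I i * x I), Finset.sum_filter]
    apply Finset.sum_congr rfl
    intro I _
    split_ifs with h
    · ring
    · have : x I = 0 := by
        by_contra h'
        exact h (hSb h')
      simp [this]
  have hinj := Matrix.mulVec_injective_of_isUnit hunit
  have key : (fun j => c * (w j : ℝ)) = fun j => (Bz.det : ℝ) * x (e j).1 := by
    apply hinj
    ext i
    simp only [Matrix.mulVec, dotProduct]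
    have h1 := hwR i
    have h2 := hz i
    calc _ = c * ∑ j, B i j * (w j : ℝ) := by rw [Finset.mul_sum]; congr 1; ext; ring
      _ = (Bz.det : ℝ) * ∑ j, B i j * x (e j).1 := by rw [h1, h2]; ring
      _ = _ := by rw [Finset.mul_sum]; congr 1; ext; ring
  have hx0 : ∀ I, I ∉ b → x I = 0 := by
    intro I hI
    by_contra h
    exact hI (hSb h)
  refine ⟨fun I => if h : I ∈ b then (w (e.symm ⟨I, h⟩)).natAbs else 0, Bz.det.natAbs,
    Int.natAbs_pos.2 hdet0, ?_, ?_⟩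
  · intro I
    by_cases h : I ∈ b
    · have := congrFun key (e.symm ⟨I, h⟩)
      simp only [Equiv.apply_symm_apply] at this
      have h3 : c * |(w (e.symm ⟨I, h⟩) : ℝ)| = |(Bz.det : ℝ)| * x I := by
        rw [← abs_of_pos hc, ← abs_mul, this, abs_mul, abs_of_nonneg (hx I)]
      simp only [h, dite_true, Nat.cast_natAbs, Int.cast_abs]
      field_simp
      linarith
    · simp [h, hx0 I h]
  · have := hadamard_01 B (by intro i j; rw [hBe]; unfold colVec; split_ifs <;> simp)
    rw [hdetB] at this
    simpa [Nat.cast_natAbs] using this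

theorem exists_circuit {N : ℕ} (k : ℕ) : ∀ (x : Finset (Fin N) → ℝ) (c : ℝ),
    (∀ I, 0 ≤ x I) → (∀ i, ∑ I, x I * colVec I i = c) → (∃ I, x I ≠ 0) →
    0 ≤ c → (Finset.univ.filter (fun I => x I ≠ 0)).card ≤ k →
    ∃ (v : Finset (Fin N) → ℕ) (d : ℕ), (∃ I, 0 < v I) ∧ (∀ I, x I = 0 → v I = 0) ∧
      (∀ i, ∑ I, (v I : ℝ) * colVec I i = d) ∧
      2 ^ N * (d : ℝ) ≤ ((N : ℝ) + 1) ^ (((N : ℝ) + 1) / 2) := by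
  induction k with
  | zero =>
    intro x c _ _ ⟨I, hI⟩ _ hk
    have : I ∈ Finset.univ.filter (fun I => x I ≠ 0) := by simpa using hI
    rw [Finset.card_eq_zero.1 (Nat.le_zero.1 hk)] at this
    simp at this
  | succ k ih =>
    intro x c hx hbal hne hc hk
    have hnn : ∀ I i, 0 ≤ x I * colVec I i := by
      intro I i
      unfold colVec
      split_ifs <;> simp [hx I]
    rcases hc.eq_or_lt with hc | hc
    · subst hc
      obtain ⟨I, hI⟩ := hne
      have hIe : I = ∅ := by
        rw [Finset.eq_empty_iff_forall_notMem]
        intro i hi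
        have := (Finset.sum_eq_zero_iff_of_nonneg (fun J _ => hnn J i)).1 (hbal i) I (Finset.mem_univ _)
        simp [colVec, hi, hI] at this
      subst hIe
      refine ⟨Pi.single ∅ 1, 0, ⟨∅, by simp⟩, ?_, ?_, ?_⟩
      · intro J hJ
        rw [Pi.single_apply, if_neg]
        rintro rfl
        exact hI hJ
      · intro i
        apply Finset.sum_eq_zero_iff_of_nonneg _ |>.2 _ |>.trans (by simp)
        · intro J _; unfold colVec; split_ifs <;> simp
        · intro J _
          rw [Pi.single_apply]
          split_ifs with h
          · simp [h, colVec]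
          · simp
      · simp; positivity
    · by_cases hli : LinearIndepOn ℝ colVec {I | x I ≠ 0}
      · obtain ⟨v, d, hd, hv, hR⟩ := cramer_step x c hx hc hbal hli
        refine ⟨v, d, ?_, ?_, ?_, hR⟩
        · obtain ⟨I, hI⟩ := hne
          refine ⟨I, ?_⟩
          have : (0:ℝ) < v I := by
            rw [hv]
            have := lt_of_le_of_ne (hx I) (Ne.symm hI)
            positivity
          exact_mod_cast this
        · intro I hI
          have := hv I
          rw [hI, mul_zero] at this
          exact_mod_cast this
        · intro i
          simp only [hv, mul_assoc]
          rw [← Finset.mul_sum, hbal]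
          field_simp
      · rw [linearDepOn_iff] at hli
        obtain ⟨f, hf, hf0, hfne⟩ := hli
        have hsum : ∀ i, ∑ I, f I * colVec I i = 0 := by
          intro i
          have := congrFun hf0 i
          simp only [Finset.sum_apply, Pi.smul_apply, smul_eq_mul, Pi.zero_apply] at this
          rw [← this]
          symm
          apply Finset.sum_subset (Finset.subset_univ _)
          intro I _ hI
          simp [Finsupp.notMem_support_iff.1 hI]
        have hfx : ∀ I, x I = 0 → f I = 0 := by
          intro I hI
          by_contra h
          exact ((Finsupp.mem_supported ℝ f).1 hf (Finsupp.mem_support_iff.2 h)) hI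
        obtain ⟨y, hy1, hy2, hy3⟩ : ∃ y : Finset (Fin N) → ℝ, (∀ i, ∑ I, y I * colVec I i = 0) ∧
            (∀ I, x I = 0 → y I = 0) ∧ ∃ I, 0 < y I := by
          obtain ⟨I, hI⟩ := Finsupp.ne_iff.1 hfne
          rcases lt_or_gt_of_ne hI with h | h
          · exact ⟨fun I => - f I, by simpa using hsum, by simpa using hfx, I, by simpa using h⟩
          · exact ⟨f, hsum, hfx, I, h⟩
        obtain ⟨t, ht, hnn', hlt⟩ := reduce_support x y hx hy2 hy3
        have hbal' : ∀ i, ∑ I, (x I - t * y I) * colVec I i = c := by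
          intro i
          simp only [sub_mul, mul_assoc, Finset.sum_sub_distrib, ← Finset.mul_sum, hbal, hy1]
          simp
        by_cases hz : ∃ I, x I - t * y I ≠ 0
        · obtain ⟨v, d, h1, h2, h3⟩ := ih _ c hnn' hbal' hz hc.le (by omega)
          exact ⟨v, d, h1, fun I hI => h2 I (by simp [hI, hy2 I hI]), h3⟩
        · push Not at hz
          rcases Nat.eq_zero_or_pos N with hN | hN
          · subst hN
            obtain ⟨I, hI⟩ := hne
            refine ⟨Pi.single I 1, 0, ⟨I, by simp⟩, ?_, fun i => i.elim0, by simp⟩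
            intro J hJ
            rw [Pi.single_apply, if_neg]
            rintro rfl
            exact hI hJ
          · have := hbal' ⟨0, hN⟩
            simp only [hz, zero_mul, Finset.sum_const_zero] at this
            exact absurd this hc.ne

theorem card_filter_eq {N : ℕ} (M : Multiset (Finset (Fin N))) (i : Fin N) :
    (((M.filter (fun I => i ∈ I)).card : ℕ) : ℝ) = ∑ I, (M.count I : ℝ) * colVec I i := by
  rw [← Multiset.sum_count_eq_card (s := Finset.univ) (fun _ _ => Finset.mem_univ _)]
  push_cast
  apply Finset.sum_congr rfl
  intro I _
  rw [Multiset.count_filter]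
  unfold colVec
  split_ifs <;> simp

theorem greedy {N : ℕ} (hN : 0 < N) (M : Multiset (Finset (Fin N))) (m : ℕ)
    (hbal : BalancedMultiset M m) (hirr : ZIrreducible M) (k : ℕ) :
    ∀ (x : Finset (Fin N) → ℝ) (c : ℝ),
    (∀ I, 0 ≤ x I) → (∀ i, ∑ I, x I * colVec I i = c) → (∀ I, x I ≤ M.count I) →
    (Finset.univ.filter (fun I => x I ≠ 0)).card ≤ k →
    (2 ^ N * (m : ℝ) ≤ ((N : ℝ) + 1) ^ (((N : ℝ) + 1) / 2)) ∨
      2 ^ N * c ≤ k * ((N : ℝ) + 1) ^ (((N : ℝ) + 1) / 2) := by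
  induction k with
  | zero =>
    intro x c _ hb _ hk
    right
    have h0 : ∀ I, x I = 0 := by
      intro I
      by_contra hI
      have : I ∈ Finset.univ.filter (fun I => x I ≠ 0) := by simpa using hI
      rw [Finset.card_eq_zero.1 (Nat.le_zero.1 hk)] at this
      simp at this
    have := hb ⟨0, hN⟩
    simp only [h0, zero_mul, Finset.sum_const_zero] at this
    simp [← this]
  | succ k ih =>
    intro x c hx hb hle hk
    by_cases hne : ∃ I, x I ≠ 0
    · have hc : 0 ≤ c := by
        rw [← hb ⟨0, hN⟩]
        apply Finset.sum_nonneg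
        intro I _
        unfold colVec
        split_ifs <;> simp [hx I]
      obtain ⟨v, d, hv0, hvx, hvb, hd⟩ := exists_circuit _ x c hx hb hne hc le_rfl
      obtain ⟨t, ht, hnn, hlt⟩ := reduce_support x (fun I => (v I : ℝ)) hx
        (fun I hI => by simp [hvx I hI]) (by simpa using hv0)
      by_cases ht1 : 1 ≤ t
      · left
        let V : Multiset (Finset (Fin N)) := ∑ I, Multiset.replicate (v I) I
        have hV : ∀ I, V.count I = v I := by
          intro I
          simp [V, Multiset.count_sum', Multiset.count_replicate]
        have hVb : BalancedMultiset V d := by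
          intro i
          have := card_filter_eq V i
          simp only [hV, hvb] at this
          exact_mod_cast this
        have hVM : V ≤ M := by
          rw [Multiset.le_iff_count]
          intro I
          rw [hV]
          have h1 := hnn I
          have h2 := hle I
          have h3 : (v I : ℝ) ≤ t * v I := le_mul_of_one_le_left (by positivity) ht1
          have : (v I : ℝ) ≤ M.count I := by linarith
          exact_mod_cast this
        have hVne : V ≠ 0 := by
          intro h
          obtain ⟨I, hI⟩ := hv0
          have := hV I
          rw [h] at this
          simp at this
          omega
        have hVeq : V = M := by
          by_contra h
          exact hirr.2 V hVM hVne h ⟨d, hVb⟩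
        have hmd : m = d := by
          rw [← hbal ⟨0, hN⟩, ← hVb ⟨0, hN⟩, hVeq]
        rw [hmd]
        exact hd
      · push Not at ht1
        have hb' : ∀ i, ∑ I, (x I - t * (v I : ℝ)) * colVec I i = c - t * d := by
          intro i
          simp only [sub_mul, mul_assoc, Finset.sum_sub_distrib, ← Finset.mul_sum, hb, hvb]
        have hle' : ∀ I, x I - t * (v I : ℝ) ≤ M.count I := by
          intro I
          have : 0 ≤ t * (v I : ℝ) := by positivity
          linarith [hle I]
        rcases ih (fun I => x I - t * v I) (c - t * d) hnn hb' hle' (by omega) with h | h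
        · exact Or.inl h
        · right
          have h4 : t * (2 ^ N * (d:ℝ)) ≤ 2 ^ N * (d:ℝ) := mul_le_of_le_one_left (by positivity) ht1.le
          push_cast
          linarith
    · push Not at hne
      have := hb ⟨0, hN⟩
      simp only [hne, zero_mul, Finset.sum_const_zero] at this
      right
      rw [← this, mul_zero]
      positivity

/-- If `M` is a `ℤ`-irreducible balanced multiset of subsets of `[N]` with complexity
`m`, then `m ≤ (N+1)^{(N+1)/2}`. -/
theorem complexity_of_Z_irreducible_multiset {N : ℕ} (hN : 1 ≤ N)
    (M : Multiset (Finset (Fin N))) (m : ℕ)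
    (hbal : BalancedMultiset M m) (hirr : ZIrreducible M) :
    (m : ℝ) ≤ ((N : ℝ) + 1) ^ (((N : ℝ) + 1) / 2) := by
  
  have h2N : (1:ℝ) ≤ 2 ^ N := one_le_pow₀ (by norm_num)
  have h := greedy hN M m hbal hirr (2 ^ N) (fun I => (M.count I : ℝ)) m (by simp)
    (fun i => by rw [← card_filter_eq, hbal i]) (fun _ => le_rfl)
    ((Finset.card_le_univ _).trans (by simp))
  rcases h with h | h
  · exact (le_mul_of_one_le_left (by positivity) h2N).trans h
  · push_cast at h
    exact le_of_mul_le_mul_left h (by positivity)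
end

section
/- The number of equivalence classes of irreducible supermodular functions on 2^[n] is at most the binomial coefficient C(n²·2^n, 2^n). -/
/-- A function on subsets of `[n]` is supermodular if
`f (I ∩ J) + f (I ∪ J) ≥ f I + f J` for all `I, J`. -/
def Supermodular {n : ℕ} (f : Finset (Fin n) → ℝ) : Prop :=
  ∀ I J : Finset (Fin n), f I + f J ≤ f (I ∩ J) + f (I ∪ J)

/-- A function on subsets of `[n]` is modular if
`f (I ∩ J) + f (I ∪ J) = f I + f J` for all `I, J`. -/
def Modular {n : ℕ} (f : Finset (Fin n) → ℝ) : Prop :=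
  ∀ I J : Finset (Fin n), f (I ∩ J) + f (I ∪ J) = f I + f J

/-- A supermodular function is irreducible if it is not modular and whenever it is a
sum of two supermodular functions, each summand is equivalent (i.e. differs by a
modular function) from `c • f` for some `c ≥ 0`. -/
def IrreducibleSupermodular {n : ℕ} (f : Finset (Fin n) → ℝ) : Prop :=
  Supermodular f ∧ ¬ Modular f ∧
  ∀ g₁ g₂ : Finset (Fin n) → ℝ, Supermodular g₁ → Supermodular g₂ → f = g₁ + g₂ →
    (∃ c : ℝ, 0 ≤ c ∧ Modular (g₁ - c • f)) ∧ (∃ c : ℝ, 0 ≤ c ∧ Modular (g₂ - c • f))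

/-- The type of irreducible supermodular functions on `2^[n]` up to equivalence
(two irreducible supermodular functions are identified when they agree up to a
modular function and a positive scaling, i.e. when they determine the same
equivalence class). -/
def IrreducibleSupermodularClasses (n : ℕ) : Type :=
  Quot (fun f g : {f : Finset (Fin n) → ℝ // IrreducibleSupermodular f} =>
    ∃ c : ℝ, 0 < c ∧ Modular (f.1 - c • g.1))

/-- The index type of local supermodularity functionals. -/
abbrev LocIdx (n : ℕ) : Type := Fin n × Fin n × Finset (Fin n)

/-- The local supermodularity functional attached to `(i, j, S)`. -/
noncomputable def locFun {n : ℕ} (t : LocIdx n) : Module.Dual ℝ (Finset (Fin n) → ℝ) :=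
  (LinearMap.proj (R := ℝ) (φ := fun _ => ℝ) (insert t.1 t.2.2 ∩ insert t.2.1 t.2.2)
    + LinearMap.proj (insert t.1 t.2.2 ∪ insert t.2.1 t.2.2)
    - LinearMap.proj (insert t.1 t.2.2) - LinearMap.proj (insert t.2.1 t.2.2) :
    (Finset (Fin n) → ℝ) →ₗ[ℝ] ℝ)

theorem locFun_apply {n : ℕ} (t : LocIdx n) (f : Finset (Fin n) → ℝ) :
    locFun t f = f (insert t.1 t.2.2 ∩ insert t.2.1 t.2.2)
      + f (insert t.1 t.2.2 ∪ insert t.2.1 t.2.2)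
      - f (insert t.1 t.2.2) - f (insert t.2.1 t.2.2) := rfl

theorem locFun_diag {n : ℕ} (i : Fin n) (S : Finset (Fin n)) (f : Finset (Fin n) → ℝ) :
    locFun (i, i, S) f = 0 := by
  simp [locFun_apply]

theorem locFun_nonneg {n : ℕ} {f : Finset (Fin n) → ℝ} (hf : Supermodular f) (t : LocIdx n) :
    0 ≤ locFun t f := by
  have := hf (insert t.1 t.2.2) (insert t.2.1 t.2.2)
  rw [locFun_apply]; linarith

theorem step_one {n : ℕ} {f : Finset (Fin n) → ℝ} (h : ∀ t, 0 ≤ locFun t f) (i : Fin n)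
    (S B : Finset (Fin n)) (hi : i ∉ S ∪ B) :
    f (insert i S) - f S ≤ f (insert i (S ∪ B)) - f (S ∪ B) := by
  induction B using Finset.induction_on with
  | empty => simp
  | insert j B hj ih =>
    have hi' : i ∉ S ∪ B := by simp at hi ⊢; tauto
    have hij : i ≠ j := by rintro rfl; simp at hi
    have ih := ih hi'
    by_cases hjS : j ∈ S ∪ B
    · have : S ∪ insert j B = S ∪ B := by
        rw [Finset.union_insert, Finset.insert_eq_self.2 hjS]
      rw [this]; exact ih
    · have := h (i, j, S ∪ B)
      rw [locFun_apply] at this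
      have e1 : insert i (S ∪ B) ∩ insert j (S ∪ B) = S ∪ B := by
        ext x; simp only [Finset.mem_inter, Finset.mem_insert]
        constructor
        · rintro ⟨rfl | h1, rfl | h2⟩ <;> tauto
        · tauto
      have e2 : insert i (S ∪ B) ∪ insert j (S ∪ B) = insert i (insert j (S ∪ B)) := by
        ext x; simp only [Finset.mem_union, Finset.mem_insert]; tauto
      simp only [e1, e2] at this
      rw [Finset.union_insert]
      linarith

theorem step_two {n : ℕ} {f : Finset (Fin n) → ℝ} (h : ∀ t, 0 ≤ locFun t f)
    (S B A : Finset (Fin n)) (hA : Disjoint A (S ∪ B)) :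
    f (S ∪ A) - f S ≤ f (S ∪ B ∪ A) - f (S ∪ B) := by
  induction A using Finset.induction_on with
  | empty => simp
  | insert a A ha ih =>
    rw [Finset.disjoint_insert_left] at hA
    have ih := ih hA.2
    have h1 := step_one h a (S ∪ A) B (by simp at hA ⊢; tauto)
    have e : S ∪ A ∪ B = S ∪ B ∪ A := Finset.union_right_comm _ _ _
    rw [e] at h1
    rw [Finset.union_insert, Finset.union_insert]
    linarith

theorem supermodular_of_loc {n : ℕ} {f : Finset (Fin n) → ℝ} (h : ∀ t, 0 ≤ locFun t f) :
    Supermodular f := by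
  intro I J
  have := step_two h (I ∩ J) (I \ J) (J \ I) (by
    rw [Finset.disjoint_left]; intro x; simp; tauto)
  have e1 : I ∩ J ∪ J \ I = J := by ext x; simp; tauto
  have e2 : I ∩ J ∪ I \ J = I := by ext x; simp; tauto
  have e3 : I ∪ J \ I = I ∪ J := by ext x; simp
  rw [e2, e1, e3] at this
  linarith

theorem exists_cert {n : ℕ} (hn : 1 ≤ n) (f : Finset (Fin n) → ℝ) :
    ∃ C : Finset (LocIdx n), C.card = 2 ^ n ∧ (∀ t ∈ C, locFun t f = 0) ∧
      ∀ g : Finset (Fin n) → ℝ, (∀ t ∈ C, locFun t g = 0) →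
        ∀ t, locFun t f = 0 → locFun t g = 0 := by
  classical
  let T : Finset (LocIdx n) := Finset.univ.filter fun t => locFun t f = 0
  have hTcard : 2 ^ n ≤ T.card := by
    let i : Fin n := ⟨0, hn⟩
    have : (Finset.univ.image fun S : Finset (Fin n) => ((i, i, S) : LocIdx n)) ⊆ T := by
      intro t ht
      simp only [Finset.mem_image, Finset.mem_univ, true_and] at ht
      obtain ⟨S, rfl⟩ := ht
      simp [T, locFun_diag]
    have h2 := Finset.card_le_card this
    rw [Finset.card_image_of_injective _ (by intro a b hab; simpa using hab)] at h2
    simpa using h2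
  obtain ⟨κ, a, ha, hspan, hli⟩ := exists_linearIndependent' ℝ (fun t : T => locFun t.1)
  have : Finite κ := Finite.of_injective a ha
  have : Fintype κ := Fintype.ofFinite κ
  have hκ : Fintype.card κ ≤ 2 ^ n := by
    have := hli.fintype_card_le_finrank
    rw [Subspace.dual_finrank_eq] at this
    simpa using this
  let B : Finset (LocIdx n) := Finset.univ.image fun k : κ => (a k).1
  have hB : B.card ≤ 2 ^ n := Finset.card_image_le.trans (by simpa using hκ)
  have hBT : B ⊆ T := by
    intro t ht
    simp only [B, Finset.mem_image, Finset.mem_univ, true_and] at ht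
    obtain ⟨k, rfl⟩ := ht
    exact (a k).2
  obtain ⟨C, hBC, hCT, hC⟩ := Finset.exists_subsuperset_card_eq hBT hB hTcard
  refine ⟨C, hC, fun t ht => by simpa [T] using hCT ht, fun g hg t ht => ?_⟩
  have hmem : locFun t ∈ Submodule.span ℝ (Set.range fun t : T => locFun t.1) :=
    Submodule.subset_span ⟨⟨t, by simpa [T] using ht⟩, rfl⟩
  rw [← hspan] at hmem
  have hle : Submodule.span ℝ (Set.range ((fun t : T => locFun t.1) ∘ a)) ≤
      LinearMap.ker (Module.Dual.eval ℝ (Finset (Fin n) → ℝ) g) := by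
    rw [Submodule.span_le]
    rintro _ ⟨k, rfl⟩
    have : locFun (a k).1 g = 0 := hg _ (hBC (by simp [B]))
    simpa using this
  simpa using hle hmem

theorem equiv_of_kernel {n : ℕ} {f g : Finset (Fin n) → ℝ} (hf : IrreducibleSupermodular f)
    (hg : IrreducibleSupermodular g) (h : ∀ t, locFun t f = 0 → locFun t g = 0) :
    ∃ c : ℝ, 0 < c ∧ Modular (g - c • f) := by
  have hev : ∀ t : LocIdx n, ∃ e : ℝ, 0 < e ∧ ∀ x : ℝ, 0 < x → x ≤ e →
      x * locFun t g ≤ locFun t f := by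
    intro t
    have hf0 := locFun_nonneg hf.1 t
    have hg0 := locFun_nonneg hg.1 t
    rcases hf0.eq_or_lt with h0 | h0
    · exact ⟨1, one_pos, fun x _ _ => by rw [h t h0.symm, ← h0]; simp⟩
    · refine ⟨locFun t f / (locFun t g + 1), by positivity, fun x hx hxe => ?_⟩
      rw [le_div_iff₀ (by positivity)] at hxe
      nlinarith
  choose e he hle using hev
  have : ∃ x : ℝ, 0 < x ∧ ∀ t, x ≤ e t := by
    rcases isEmpty_or_nonempty (LocIdx n) with hE | hN
    · exact ⟨1, one_pos, fun t => (hE.false t).elim⟩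
    · obtain ⟨t0, ht0⟩ := Finite.exists_min e
      exact ⟨e t0, he t0, ht0⟩
  obtain ⟨x, hx, hxe⟩ := this
  have s1 : Supermodular (f - x • g) := by
    apply supermodular_of_loc
    intro t
    have := hle t x hx (hxe t)
    rw [map_sub, map_smul, smul_eq_mul]; linarith
  have s2 : Supermodular (x • g) := by
    intro I J
    have := mul_le_mul_of_nonneg_left (hg.1 I J) hx.le
    simp only [Pi.smul_apply, smul_eq_mul]; linarith
  obtain ⟨-, c, hc, hm⟩ := hf.2.2 _ _ s1 s2 (by simp)
  rcases hc.eq_or_lt with h0 | h0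
  · exfalso
    apply hg.2.1
    intro I J
    have := hm I J
    rw [← h0] at this
    simp only [Pi.sub_apply, Pi.smul_apply, smul_eq_mul, zero_mul, sub_zero] at this
    apply mul_left_cancel₀ hx.ne'
    linarith
  · refine ⟨c / x, by positivity, fun I J => ?_⟩
    have := hm I J
    simp only [Pi.sub_apply, Pi.smul_apply, smul_eq_mul] at this ⊢
    field_simp
    linarith

/-- The number of equivalence classes of irreducible supermodular functions on `2^[n]`
is at most the binomial coefficient `C(n²·2^n, 2^n)`. -/
theorem count_irreducible_supermodular_upper {n : ℕ} (hn : 1 ≤ n) :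
    Nat.card (IrreducibleSupermodularClasses n) ≤ (n ^ 2 * 2 ^ n).choose (2 ^ n) := by
  classical
  choose C hcard hzero hker using fun f : Finset (Fin n) → ℝ => exists_cert hn f
  let rep : IrreducibleSupermodularClasses n →
      {f : Finset (Fin n) → ℝ // IrreducibleSupermodular f} := fun q => Quot.out q
  have hrep : ∀ q, Quot.mk _ (rep q) = q := fun q => Quot.out_eq q
  let F : IrreducibleSupermodularClasses n →
      (Finset.powersetCard (2 ^ n) (Finset.univ : Finset (LocIdx n))) :=
    fun q => ⟨C (rep q).1, by simp [Finset.mem_powersetCard, hcard]⟩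
  have hF : Function.Injective F := by
    intro p q hpq
    have hC : C (rep p).1 = C (rep q).1 := congrArg Subtype.val hpq
    rw [← hrep p, ← hrep q]
    apply Quot.sound
    exact equiv_of_kernel (rep q).2 (rep p).2
      (hker _ _ (by rw [← hC]; exact hzero _))
  refine (Nat.card_le_card_of_injective F hF).trans (le_of_eq ?_)
  rw [Nat.card_eq_fintype_card, Fintype.card_coe, Finset.card_powersetCard, Finset.card_univ]
  congr 1
  simp only [Fintype.card_prod, Fintype.card_fin, Fintype.card_finset]
  ring
end

section
/- Let f be an irreducible supermodular function on 2^[n]. Then the complexity of f is at most 2^{n²·2^n}. -/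
/-- A pair `{I, J}` of subsets of `[n]` is close if
`|I| = |J| = |I ∩ J| + 1 = |I ∪ J| − 1`. -/
def ClosePair {n : ℕ} (I J : Finset (Fin n)) : Prop :=
  I.card = J.card ∧ I.card = (I ∩ J).card + 1 ∧ I.card + 1 = (I ∪ J).card

instance {n : ℕ} (I J : Finset (Fin n)) : Decidable (ClosePair I J) := by
  unfold ClosePair; infer_instance

/-- `I_r(σ) = {σ₁, …, σ_r}` (in `0`-indexed form, `{σ 0, …, σ (r-1)}`). -/
def Iset {n : ℕ} (σ : Equiv.Perm (Fin n)) (r : ℕ) : Finset (Fin n) :=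
  Finset.univ.filter (fun x => (σ.symm x : ℕ) < r)

/-- `J_r(σ) = {σ₂, …, σ_{r+1}}` (in `0`-indexed form, `{σ 1, …, σ r}`). -/
def Jset {n : ℕ} (σ : Equiv.Perm (Fin n)) (r : ℕ) : Finset (Fin n) :=
  Finset.univ.filter (fun x => 1 ≤ (σ.symm x : ℕ) ∧ (σ.symm x : ℕ) < r + 1)

/-- The path sum of `s` along the permutation `σ`: `P_σ(s) = Σ_{r=1}^{n-1} s_{I_r, J_r}`. -/
def pathSumZ {n : ℕ} (σ : Equiv.Perm (Fin n)) (s : Finset (Fin n) → Finset (Fin n) → ℤ) : ℤ :=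
  ∑ r ∈ Finset.Icc 1 (n - 1), s (Iset σ r) (Jset σ r)


section SiegelPart

attribute [local instance] Matrix.seminormedAddCommGroup

lemma small_kernel_vector {ι β : Type} [Fintype ι] [Fintype β] [Nonempty β]
    (v : ι → β → ℤ) (hv : ∀ i b, |v i b| ≤ 4) (x : β → ℝ) (hx : x ≠ 0)
    (hvx : ∀ i, ∑ b, (v i b : ℝ) * x b = 0) :
    ∃ t : β → ℤ, t ≠ 0 ∧ (∀ i, ∑ b, v i b * t b = 0) ∧
      ∀ b, |t b| ≤ ((Fintype.card β : ℤ) * 4) ^ (Fintype.card β - 1) := by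
  classical
  obtain ⟨κ, a, ha, hsp, hli⟩ := exists_linearIndependent' ℝ
    (fun i => (fun b => (v i b : ℝ)) : ι → β → ℝ)
  have : Finite κ := Finite.of_injective a ha
  have : Fintype κ := Fintype.ofFinite κ
  -- a vector annihilated by the selected rows is annihilated by all rows
  have key : ∀ y : β → ℝ, (∀ k, ∑ b, (v (a k) b : ℝ) * y b = 0) →
      ∀ w ∈ Submodule.span ℝ (Set.range (fun i => (fun b => (v i b : ℝ)) : ι → β → ℝ)),
        ∑ b, w b * y b = 0 := by
    intro y hy w hw
    rw [← hsp] at hw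
    induction hw using Submodule.span_induction with
    | mem w h => obtain ⟨k, rfl⟩ := h; exact hy k
    | zero => simp
    | add p q _ _ hp hq => simp [add_mul, Finset.sum_add_distrib, hp, hq]
    | smul c p _ hp => simp [mul_assoc, ← Finset.mul_sum, hp]
  have hβ : 1 ≤ Fintype.card β := Fintype.card_pos
  have hbase : (1 : ℤ) ≤ (Fintype.card β : ℤ) * 4 := by
    have : (1 : ℤ) ≤ Fintype.card β := by exact_mod_cast hβ
    linarith
  have hcard : Fintype.card κ < Fintype.card β := by
    by_contra! hge
    have hle : Fintype.card κ ≤ Module.finrank ℝ (β → ℝ) := hli.fintype_card_le_finrank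
    have heq : Fintype.card κ = Module.finrank ℝ (β → ℝ) := by
      rw [Module.finrank_fintype_fun_eq_card] at hle ⊢
      omega
    have htop := hli.span_eq_top_of_card_eq_finrank' heq
    apply hx
    funext b
    have := key x (fun k => hvx (a k)) (Pi.single b 1) (by rw [← hsp, htop]; trivial)
    simpa [Pi.single_apply] using this
  have fin : ∀ t : β → ℤ, (∀ k, ∑ b, v (a k) b * t b = 0) → ∀ i, ∑ b, v i b * t b = 0 := by
    intro t ht i
    have := key (fun b => (t b : ℝ)) (fun k => by exact_mod_cast ht k) _
      (Submodule.subset_span ⟨i, rfl⟩)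
    beta_reduce at this
    exact_mod_cast this
  rcases Nat.eq_zero_or_pos (Fintype.card κ) with h0 | hpos
  · have : IsEmpty κ := Fintype.card_eq_zero_iff.1 h0
    refine ⟨fun _ => 1, ?_, fin _ (fun k => isEmptyElim k), fun b => ?_⟩
    · intro h
      have := congrFun h (Classical.arbitrary β)
      simp at this
    · simpa using one_le_pow₀ hbase
  · let A : Matrix κ β ℤ := Matrix.of (fun k b => v (a k) b)
    obtain ⟨t, ht0, htA, htn⟩ := Int.Matrix.exists_ne_zero_int_vec_norm_le A hcard hpos
    refine ⟨t, ht0, fin t (fun k => ?_), fun b => ?_⟩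
    · have := congrFun htA k
      simpa [Matrix.mulVec, dotProduct, A] using this
    · have hA : ‖A‖ ≤ 4 := by
        rw [Matrix.norm_le_iff (by norm_num)]
        intro k b
        rw [Int.norm_eq_abs]
        exact_mod_cast hv (a k) b
      have h1 : ‖t b‖ ≤ ‖t‖ := norm_le_pi_norm t b
      have hβr : (1 : ℝ) ≤ Fintype.card β := by exact_mod_cast hβ
      have hdiff : (1 : ℝ) ≤ (Fintype.card β : ℝ) - Fintype.card κ := by
        have : (Fintype.card κ : ℝ) + 1 ≤ Fintype.card β := by exact_mod_cast hcard
        linarith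
      have h2 : ((Fintype.card β : ℝ) * max 1 ‖A‖) ^
          ((Fintype.card κ : ℝ) / (Fintype.card β - Fintype.card κ)) ≤
          ((Fintype.card β : ℝ) * 4) ^ (Fintype.card β - 1) := by
        rw [← Real.rpow_natCast]
        have hm : max 1 ‖A‖ ≤ 4 := max_le (by norm_num) hA
        calc _ ≤ ((Fintype.card β : ℝ) * 4) ^
              ((Fintype.card κ : ℝ) / (Fintype.card β - Fintype.card κ)) := by
              apply Real.rpow_le_rpow
              · positivity
              · gcongr
              · positivity
          _ ≤ _ := by
              apply Real.rpow_le_rpow_of_exponent_le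
              · linarith
              · rw [div_le_iff₀ (by linarith)]
                have h3 : (Fintype.card κ : ℝ) ≤ ((Fintype.card β - 1 : ℕ) : ℝ) := by
                  exact_mod_cast (by omega)
                nlinarith
      have h4 := h1.trans (htn.trans h2)
      rw [Int.norm_eq_abs] at h4
      exact_mod_cast h4

end SiegelPart

lemma supermodular_of_close {n : ℕ} (g : Finset (Fin n) → ℝ)
    (h : ∀ I J, ClosePair I J → g I + g J ≤ g (I ∩ J) + g (I ∪ J)) : Supermodular g := by
  have s1 : ∀ (A : Finset (Fin n)) (x y : Fin n), x ∉ A → y ∉ A → x ≠ y →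
      g (insert x A) + g (insert y A) ≤ g A + g (insert x (insert y A)) := by
    intro A x y hx hy hxy
    have e1 : insert x A ∩ insert y A = A := by grind
    have e2 : insert x A ∪ insert y A = insert x (insert y A) := by grind
    have := h (insert x A) (insert y A) (by
      unfold ClosePair
      rw [e1, e2]
      rw [Finset.card_insert_of_notMem hx, Finset.card_insert_of_notMem hy,
        Finset.card_insert_of_notMem (by grind), Finset.card_insert_of_notMem hy]
      simp)
    rwa [e1, e2] at this
  have s2 : ∀ (A D : Finset (Fin n)) (x : Fin n), x ∉ A → x ∉ D →
      g (insert x A) + g (A ∪ D) ≤ g A + g (insert x (A ∪ D)) := by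
    intro A D x hxA hxD
    induction D using Finset.induction_on with
    | empty => simp [add_comm]
    | insert y D hy ih =>
      have ih := ih (by grind)
      by_cases hyA : y ∈ A
      · have : A ∪ insert y D = A ∪ D := by grind
        rw [this]; exact ih
      · have e := s1 (A ∪ D) x y (by grind) (by grind) (by grind)
        rw [Finset.union_insert]
        linarith
  have s3 : ∀ (A D C : Finset (Fin n)), Disjoint C D →
      g (A ∪ C) + g (A ∪ D) ≤ g A + g (A ∪ C ∪ D) := by
    intro A D C hCD
    induction C using Finset.induction_on with
    | empty => simp
    | insert y C hy ih =>
      have ih := ih (by grind)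
      by_cases hyA : y ∈ A
      · have : A ∪ insert y C = A ∪ C := by grind
        rw [this]; exact ih
      · have e := s2 (A ∪ C) D y (by grind) (by grind)
        rw [Finset.union_insert, Finset.insert_union]
        linarith
  intro I J
  have := s3 (I ∩ J) (J \ I) (I \ J) (by rw [Finset.disjoint_left]; grind)
  have e1 : I ∩ J ∪ I \ J = I := by grind
  have e2 : I ∩ J ∪ J \ I = J := by grind
  have e3 : I ∪ J \ I = I ∪ J := by grind
  rw [e1, e2, e3] at this
  exact this

lemma modular_eq_zero {n : ℕ} (h : Finset (Fin n) → ℝ) (hm : Modular h)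
    (h0 : ∀ I, I.card ≤ 1 → h I = 0) : h = 0 := by
  funext I
  induction I using Finset.induction_on with
  | empty => exact h0 _ (by simp)
  | insert a s ha ih =>
    have e := hm {a} s
    rw [Finset.singleton_inter_of_notMem ha, ← Finset.insert_eq, h0 ∅ (by simp),
      h0 {a} (by simp), ih] at e
    simpa using e

lemma exists_eps {α : Type} [Finite α] (F H : α → ℝ) :
    ∃ ε : ℝ, 0 < ε ∧ ∀ p, 0 < F p → ε * |H p| ≤ F p := by
  have : ∀ᶠ ε in nhdsWithin (0 : ℝ) (Set.Ioi 0), ∀ p, 0 < F p → ε * |H p| ≤ F p := by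
    rw [Filter.eventually_all]
    intro p
    by_cases hp : 0 < F p
    · have ht : Filter.Tendsto (fun ε : ℝ => ε * |H p|) (nhdsWithin 0 (Set.Ioi 0)) (nhds 0) := by
        have : Continuous (fun ε : ℝ => ε * |H p|) := by fun_prop
        simpa using (this.tendsto 0).mono_left nhdsWithin_le_nhds
      filter_upwards [ht.eventually (gt_mem_nhds hp)] with ε hε _ using hε.le
    · exact Filter.Eventually.of_forall fun _ h => absurd h hp
  obtain ⟨ε, h1, h2⟩ := (this.and self_mem_nhdsWithin).exists
  exact ⟨ε, h2, h1⟩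

/-- supermodularity value -/
def sval {n : ℕ} (f : Finset (Fin n) → ℝ) (I J : Finset (Fin n)) : ℝ :=
  f (I ∩ J) + f (I ∪ J) - f I - f J

lemma sval_proportional {n : ℕ} (f h : Finset (Fin n) → ℝ) (hf : IrreducibleSupermodular f)
    (hz : ∀ I J, ClosePair I J → sval f I J = 0 → sval h I J = 0) :
    ∃ l : ℝ, Modular (h - l • f) := by
  obtain ⟨hsm, -, hirr⟩ := hf
  obtain ⟨ε, hε, hle⟩ := exists_eps
    (fun p : Finset (Fin n) × Finset (Fin n) => sval f p.1 p.2) (fun p => sval h p.1 p.2)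
  have hab : ∀ I J, ClosePair I J → ε * |sval h I J| ≤ sval f I J := by
    intro I J hIJ
    have h0 : 0 ≤ sval f I J := by have := hsm I J; unfold sval; linarith
    rcases h0.lt_or_eq with hp | hp
    · exact hle (I, J) hp
    · rw [hz I J hIJ hp.symm, ← hp]; simp
  have hsup : ∀ d : ℝ, |d| ≤ 1 → Supermodular ((1 / 2 : ℝ) • (f + (d * ε) • h)) := by
    intro d hd
    apply supermodular_of_close
    intro I J hIJ
    have h1 := hab I J hIJ
    have h2 : |d * (ε * sval h I J)| ≤ ε * |sval h I J| := by
      rw [abs_mul, abs_mul, abs_of_pos hε]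
      have : 0 ≤ ε * |sval h I J| := by positivity
      nlinarith
    have h3 := (abs_le.1 h2).1
    simp only [Pi.smul_apply, Pi.add_apply, smul_eq_mul]
    unfold sval at *
    linarith
  obtain ⟨⟨c, -, hc⟩, -⟩ := hirr _ _ (hsup 1 (by simp)) (hsup (-1) (by simp)) (by
    funext I; simp; ring)
  refine ⟨(2 * c - 1) / ε, fun I J => ?_⟩
  have := hc I J
  simp only [Pi.smul_apply, Pi.add_apply, Pi.sub_apply, smul_eq_mul] at this ⊢
  field_simp
  linarith

lemma Iset_card {n : ℕ} (σ : Equiv.Perm (Fin n)) (r : ℕ) (hr : r ≤ n) :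
    (Iset σ r).card = r := by
  have : Iset σ r = (Finset.univ.filter (fun x : Fin n => (x : ℕ) < r)).map σ.toEmbedding := by
    ext x
    simp [Iset]
  rw [this, Finset.card_map, Fin.card_filter_val_lt]
  omega

lemma Jset_card {n : ℕ} (σ : Equiv.Perm (Fin n)) (r : ℕ) (hr : r + 1 ≤ n) :
    (Jset σ r).card = r := by
  have : Jset σ r = Iset σ (r + 1) \ Iset σ 1 := by
    ext x
    simp [Iset, Jset]
    omega
  rw [this, Finset.card_sdiff_of_subset, Iset_card _ _ hr, Iset_card _ _ (by omega)]
  · omega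
  · intro x
    simp [Iset]
    omega

lemma close_path {n : ℕ} (σ : Equiv.Perm (Fin n)) (r : ℕ) (h1 : 1 ≤ r) (hr : r ≤ n - 1) :
    ClosePair (Iset σ r) (Jset σ r) := by
  have e1 : Iset σ r ∩ Jset σ r = Jset σ (r - 1) := by
    ext x
    simp [Iset, Jset]
    omega
  have e2 : Iset σ r ∪ Jset σ r = Iset σ (r + 1) := by
    ext x
    simp [Iset, Jset]
    omega
  unfold ClosePair
  rw [e1, e2, Iset_card _ _ (by omega), Iset_card _ _ (by omega), Jset_card _ _ (by omega),
    Jset_card _ _ (by omega)]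
  omega

/-- the integer row vectors of the linear system -/
noncomputable def rowVec {n : ℕ} (f : Finset (Fin n) → ℝ) :
    (Finset (Fin n) × Finset (Fin n)) ⊕ Finset (Fin n) → Finset (Fin n) → ℤ :=
  open Classical in fun i K => match i with
  | Sum.inl (I, J) => if ClosePair I J ∧ sval f I J = 0 then
      (if K = I ∩ J then 1 else 0) + (if K = I ∪ J then 1 else 0)
        - (if K = I then 1 else 0) - (if K = J then 1 else 0) else 0
  | Sum.inr I => if I.card ≤ 1 then (if K = I then 1 else 0) else 0

lemma rowVec_bound {n : ℕ} (f : Finset (Fin n) → ℝ) (i) (K) : |rowVec f i K| ≤ 4 := by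
  classical
  rcases i with ⟨I, J⟩ | I
  · simp only [rowVec]
    split_ifs <;> norm_num
  · simp only [rowVec]
    split_ifs <;> norm_num

lemma rowVec_inl {n : ℕ} (f : Finset (Fin n) → ℝ) {R : Type} [CommRing R]
    (y : Finset (Fin n) → R) (I J : Finset (Fin n))
    (h : ClosePair I J ∧ sval f I J = 0) :
    ∑ K, (rowVec f (Sum.inl (I, J)) K : R) * y K = y (I ∩ J) + y (I ∪ J) - y I - y J := by
  simp [rowVec, h, sub_mul, add_mul, Finset.sum_add_distrib]

lemma rowVec_inr {n : ℕ} (f : Finset (Fin n) → ℝ) {R : Type} [CommRing R]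
    (y : Finset (Fin n) → R) (I : Finset (Fin n)) (h : I.card ≤ 1) :
    ∑ K, (rowVec f (Sum.inr I) K : R) * y K = y I := by
  simp [rowVec, h]

lemma affine_modular {n : ℕ} (a : ℝ) (b : Fin n → ℝ) :
    Modular (fun I : Finset (Fin n) => a + ∑ i ∈ I, b i) := by
  intro I J
  have := Finset.sum_union_inter (s₁ := I) (s₂ := J) (f := b)
  simp only
  linarith

lemma exists_small_integer {n : ℕ} (f : Finset (Fin n) → ℝ) (hf : ¬ Modular f) :
    ∃ t : Finset (Fin n) → ℤ, t ≠ 0 ∧ (∀ I, I.card ≤ 1 → t I = 0) ∧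
      (∀ I J, ClosePair I J → sval f I J = 0 → t (I ∩ J) + t (I ∪ J) - t I - t J = 0) ∧
      ∀ I, |t I| ≤ (2 ^ n * 4) ^ (2 ^ n - 1) := by
  set L : Finset (Fin n) → ℝ := fun I => f ∅ + ∑ i ∈ I, (f {i} - f ∅) with hL
  have hLm : Modular L := affine_modular _ _
  obtain ⟨t, h0, h1, h2⟩ := small_kernel_vector (rowVec f) (rowVec_bound f) (f - L)
    (by
      intro h
      apply hf
      rw [sub_eq_zero.1 h]
      exact hLm)
    (by
      rintro (⟨I, J⟩ | I)
      · by_cases h : ClosePair I J ∧ sval f I J = 0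
        · rw [rowVec_inl f _ I J h]
          have e1 := h.2
          have e2 := hLm I J
          unfold sval at e1
          simp only [Pi.sub_apply]
          linarith
        · simp [rowVec, h]
      · by_cases h : I.card ≤ 1
        · rw [rowVec_inr f _ I h]
          rcases Nat.le_one_iff_eq_zero_or_eq_one.1 h with h | h
          · rw [Finset.card_eq_zero.1 h]; simp [hL]
          · obtain ⟨i, rfl⟩ := Finset.card_eq_one.1 h
            simp [hL]
        · simp [rowVec, h])
  refine ⟨t, h0, fun I hI => ?_, fun I J hc hz => ?_, fun I => ?_⟩
  · have := h1 (Sum.inr I)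
    rwa [← rowVec_inr f t I hI]
  · have := h1 (Sum.inl (I, J))
    rwa [← rowVec_inl f t I J ⟨hc, hz⟩]
  · simpa using h2 I

theorem complexity_of_irreducible_supermodular {n : ℕ} (hn : 0 < n)
    (f : Finset (Fin n) → ℝ) (hf : IrreducibleSupermodular f)
    (s : Finset (Fin n) → Finset (Fin n) → ℤ) (c : ℝ) (hc : 0 < c)
    (hs : ∀ I J : Finset (Fin n), ClosePair I J →
      (s I J : ℝ) = c * (f (I ∩ J) + f (I ∪ J) - f I - f J))
    (hgcd : Finset.gcd
      (Finset.univ.filter (fun p : Finset (Fin n) × Finset (Fin n) => ClosePair p.1 p.2))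
      (fun p => s p.1 p.2) = 1)
    (m : Fin n → ℤ)
    (hm : ∀ σ : Equiv.Perm (Fin n), pathSumZ σ s = m (σ ⟨0, hn⟩)) :
    ∀ i : Fin n, m i ≤ 2 ^ (n ^ 2 * 2 ^ n) := by
  intro i
  obtain ⟨t, ht0, ht1, htz, htb⟩ := exists_small_integer f hf.2.1
  set B : ℤ := (2 ^ n * 4) ^ (2 ^ n - 1) with hB
  have hB0 : 0 ≤ B := by positivity
  obtain ⟨l, hl⟩ := sval_proportional f (fun I => (t I : ℝ)) hf (by
    intro I J h1 h2
    unfold sval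
    beta_reduce
    exact_mod_cast htz I J h1 h2)
  have hl0 : l ≠ 0 := by
    rintro rfl
    rw [zero_smul, sub_zero] at hl
    have := modular_eq_zero _ hl (fun I hI => by simp [ht1 I hI])
    apply ht0
    funext I
    have := congrFun this I
    simpa using this
  let T : Finset (Fin n) × Finset (Fin n) → ℤ :=
    fun p => t (p.1 ∩ p.2) + t (p.1 ∪ p.2) - t p.1 - t p.2
  have hT : ∀ I J, ClosePair I J → (T (I, J) : ℝ) = l / c * s I J := by
    intro I J h
    rw [hs I J h]
    have := hl I J
    simp only [Pi.sub_apply, Pi.smul_apply, smul_eq_mul] at this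
    simp only [T]
    push_cast
    field_simp
    linarith
  have hsb : ∀ I J, ClosePair I J → |s I J| ≤ 4 * B := by
    intro I J h
    by_cases hz : s I J = 0
    · rw [hz]; simpa using hB0
    have hTne : T (I, J) ≠ 0 := by
      intro h'
      have e := hT I J h
      rw [h'] at e
      have : (s I J : ℝ) ≠ 0 := by exact_mod_cast hz
      have h2 : l / c * s I J ≠ 0 := by positivity
      exact h2 (by simpa using e.symm)
    have hdvd : s I J ∣ T (I, J) := by
      have h1 : s I J ∣ Finset.gcd
          (Finset.univ.filter (fun p : Finset (Fin n) × Finset (Fin n) => ClosePair p.1 p.2))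
          (fun p => T (I, J) * s p.1 p.2) := by
        apply Finset.dvd_gcd
        rintro ⟨I', J'⟩ hp
        have hp : ClosePair I' J' := by simpa using hp
        refine ⟨T (I', J'), ?_⟩
        have e : (T (I, J) : ℝ) * s I' J' = s I J * T (I', J') := by
          rw [hT I J h, hT I' J' hp]; ring
        exact_mod_cast e
      rw [Finset.gcd_mul_left, hgcd, mul_one] at h1
      exact (dvd_normalize_iff).1 h1
    have h3 : |s I J| ≤ |T (I, J)| := by
      apply Int.le_of_dvd (abs_pos.2 hTne)
      exact (abs_dvd_abs _ _).2 hdvd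
    refine h3.trans ?_
    have a1 := abs_le.1 (htb (I ∩ J))
    have a2 := abs_le.1 (htb (I ∪ J))
    have a3 := abs_le.1 (htb I)
    have a4 := abs_le.1 (htb J)
    simp only [T]
    rw [abs_le]
    constructor <;> linarith
  have hn2 : 2 ≤ n := by
    by_contra! hlt
    have h1 : n = 1 := by omega
    subst h1
    apply hf.2.1
    intro I J
    have : ∀ K : Finset (Fin 1), K = ∅ ∨ K = {0} := by decide
    rcases this I with rfl | rfl <;> rcases this J with rfl | rfl <;> simp [add_comm]
  have hsum : m i ≤ (n : ℤ) * (4 * B) := by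
    have e := hm (Equiv.swap ⟨0, hn⟩ i)
    rw [Equiv.swap_apply_left] at e
    rw [← e, pathSumZ]
    calc _ ≤ ∑ r ∈ Finset.Icc 1 (n - 1), 4 * B := by
          apply Finset.sum_le_sum
          intro r hr
          rw [Finset.mem_Icc] at hr
          exact (le_abs_self _).trans (hsb _ _ (close_path _ r hr.1 hr.2))
      _ ≤ _ := by
          rw [Finset.sum_const, Nat.card_Icc, nsmul_eq_mul]
          gcongr
          omega
  refine hsum.trans ?_
  have hnp : (n : ℤ) ≤ 2 ^ n := by exact_mod_cast Nat.lt_two_pow_self.le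
  calc (n : ℤ) * (4 * B) ≤ 2 ^ n * (4 * B) := by gcongr
    _ = (2 ^ n * 4) ^ (2 ^ n) := by
        have : 2 ^ n = (2 ^ n - 1) + 1 := by have := Nat.one_le_two_pow (n := n); omega
        rw [hB, ← mul_assoc, ← pow_succ', ← this]
    _ = 2 ^ ((n + 2) * 2 ^ n) := by
        rw [pow_mul, pow_add]; norm_num
    _ ≤ _ := by
        apply pow_le_pow_right₀ (by norm_num)
        apply Nat.mul_le_mul_right
        nlinarith
end
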